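/- arXiv:2605.08935 — 2 statements merged into one kernel-verified Lean document; each statement's English description precedes it below -/
import Mathlib

section
/- Let E be a normed vector space, F : E → E Lipschitz with constant L_F ≥ 0, C : E → E Lipschitz with constant L_C ≥ 0 with λ := L_C · L_F < 1, x : ℕ → E a trajectory satisfying ‖C(F(x t)) − x (t+1)‖ ≤ ε_corr for all t, and x̃ : ℕ → E the corrected rollout x̃ (t+1) = C (F (x̃ t)) with arbitrary initial error ‖x̃ 0 − x 0‖. Then limsup_{T → ∞} ‖x̃ T − x T‖ ≤ ε_corr / (1 − λ): the influence of the initial error λ^T · ‖x̃ 0 − x 0‖ vanishes and the asymptotic error is bounded by ε_corr / (1 − λ). -/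
/-!
For a `K`-Lipschitz map `f` (here `C ∘ F`), the triangle inequality through `f (x t)` gives the
error `e t = dist (y t) (x t)` the recursion `e (t + 1) ≤ K * e t + ε`. Measured from the fixed
point `ε / (1 - K)` of the affine map `s ↦ K * s + ε`, this recursion is a geometric contraction.
-/

open Filter Topology

open scoped NNReal

section AffineRecursion

variable {u : ℕ → ℝ} {c b : ℝ}

theorem le_pow_mul_sub_add_of_succ_le_mul_add (hc₀ : 0 ≤ c) (hc₁ : c ≠ 1)
    (hu : ∀ n, u (n + 1) ≤ c * u n + b) (n : ℕ) :
    u n ≤ c ^ n * (u 0 - b / (1 - c)) + b / (1 - c) := by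
  have fixed_point : c * (b / (1 - c)) + b = b / (1 - c) := by
    have : 1 - c ≠ 0 := sub_ne_zero.mpr hc₁.symm
    field_simp
    ring
  have contraction : ∀ k < n,
      u (k + 1) - b / (1 - c) ≤ c * (u k - b / (1 - c)) := fun k _ => by
    linarith [hu k]
  exact sub_le_iff_le_add.mp (le_geom (u := fun k => u k - b / (1 - c)) hc₀ n contraction)

theorem limsup_le_div_one_sub_of_succ_le_mul_add (hc₀ : 0 ≤ c) (hc₁ : c < 1)
    (hu : ∀ n, u (n + 1) ≤ c * u n + b) (hcob : atTop.IsCoboundedUnder (· ≤ ·) u) :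
    limsup u atTop ≤ b / (1 - c) := by
  have hlim : Tendsto (fun n => c ^ n * (u 0 - b / (1 - c)) + b / (1 - c)) atTop
      (𝓝 (b / (1 - c))) := by
    simpa only [zero_mul, zero_add] using
      ((tendsto_pow_atTop_nhds_zero_of_lt_one hc₀ hc₁).mul_const _).add_const (b / (1 - c))
  calc limsup u atTop
      ≤ limsup (fun n => c ^ n * (u 0 - b / (1 - c)) + b / (1 - c)) atTop :=
        limsup_le_limsup
          (.of_forall (le_pow_mul_sub_add_of_succ_le_mul_add hc₀ hc₁.ne hu))
          hcob hlim.isBoundedUnder_le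
    _ = b / (1 - c) := hlim.limsup_eq

end AffineRecursion

theorem pnp_corrector_limsup_bound_general {α : Type*} [PseudoMetricSpace α] {f : α → α}
    {K : ℝ≥0} (hf : LipschitzWith K f) (hK : K < 1) {x y : ℕ → α} {ε : ℝ}
    (hx : ∀ t, dist (f (x t)) (x (t + 1)) ≤ ε) (hy : ∀ t, y (t + 1) = f (y t)) :
    limsup (fun t => dist (y t) (x t)) atTop ≤ ε / (1 - K) := by
  have error_succ_le (t : ℕ) : dist (y (t + 1)) (x (t + 1)) ≤ K * dist (y t) (x t) + ε :=
    calc dist (y (t + 1)) (x (t + 1))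
        ≤ dist (f (y t)) (f (x t)) + dist (f (x t)) (x (t + 1)) := by
          rw [hy]
          exact dist_triangle _ _ _
      _ ≤ K * dist (y t) (x t) + ε := add_le_add (hf.dist_le_mul _ _) (hx t)
  exact limsup_le_div_one_sub_of_succ_le_mul_add K.coe_nonneg hK error_succ_le
    (.of_frequently_ge (.of_forall fun _ => dist_nonneg))

/-- Asymptotic PnP-Corrector bound: with contraction `λ = L_C * L_F < 1`
and arbitrary initial error, the influence of the initial error vanishes
and `limsup_{T → ∞} ‖xtil T - x T‖ ≤ ε_corr / (1 - λ)`. -/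
theorem pnp_corrector_limsup_bound
    {E : Type*} [NormedAddCommGroup E] [NormedSpace ℝ E]
    (F C : E → E) (L_F L_C : ℝ) (hLF : 0 ≤ L_F) (hLC : 0 ≤ L_C)
    (hcontr : L_C * L_F < 1)
    (hLipF : ∀ a b : E, ‖F a - F b‖ ≤ L_F * ‖a - b‖)
    (hLipC : ∀ a b : E, ‖C a - C b‖ ≤ L_C * ‖a - b‖)
    (x : ℕ → E) (ε_corr : ℝ) (hε : 0 ≤ ε_corr)
    (hcorr : ∀ t : ℕ, ‖C (F (x t)) - x (t + 1)‖ ≤ ε_corr)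
    (xtil : ℕ → E) (hroll : ∀ t : ℕ, xtil (t + 1) = C (F (xtil t))) :
    Filter.limsup (fun T : ℕ => ‖xtil T - x T‖) Filter.atTop
      ≤ ε_corr / (1 - L_C * L_F) := by
  lift L_F to ℝ≥0 using hLF
  lift L_C to ℝ≥0 using hLC
  have hF : LipschitzWith L_F F := .of_dist_le_mul (by simpa only [dist_eq_norm] using hLipF)
  have hC : LipschitzWith L_C C := .of_dist_le_mul (by simpa only [dist_eq_norm] using hLipC)
  simpa only [dist_eq_norm, NNReal.coe_mul] using
    pnp_corrector_limsup_bound_general (hC.comp hF) (mod_cast hcontr)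
      (by simpa only [dist_eq_norm, Function.comp_apply] using hcorr) hroll
end

section
/- Let E be a normed vector space, F : E → E Lipschitz with constant L_F ≥ 0, C : E → E Lipschitz with constant L_C ≥ 0 with λ := L_C · L_F < 1, x : ℕ → E a trajectory satisfying ‖C(F(x t)) − x (t+1)‖ ≤ ε_corr for all t, and x̃ : ℕ → E the corrected rollout x̃ (t+1) = C (F (x̃ t)). Then for every T ∈ ℕ, ‖x̃ T − x T‖ ≤ λ^T · ‖x̃ 0 − x 0‖ + ε_corr / (1 − λ); in particular, if the ground-truth trajectory x is bounded, the corrected rollout x̃ is also a bounded sequence in E. -/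
open Bornology Finset
open scoped NNReal

theorem le_pow_mul_add_mul_geom_sum_of_succ_le {R : Type*} [CommSemiring R] [PartialOrder R]
    [IsOrderedRing R] {u : ℕ → R} {b c : R} (hc : 0 ≤ c)
    (hu : ∀ n, u (n + 1) ≤ c * u n + b) (n : ℕ) :
    u n ≤ c ^ n * u 0 + b * ∑ i ∈ range n, c ^ i := by
  have gronwall : u n ≤ u 0 * c ^ n + ∑ k ∈ range n, b * c ^ (n - (k + 1)) := by
    simpa only [prod_const, Nat.card_Ico, Nat.Ico_zero_eq_range, card_range] using
      discrete_gronwall_prod_general (b := fun _ ↦ b) (c := fun _ ↦ c)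
        (fun n _ ↦ hu n) (fun _ _ ↦ hc) n.zero_le
  simpa only [mul_comm (u 0), ← mul_sum, ← sum_range_reflect (c ^ ·), Nat.sub_sub,
    Nat.add_comm 1] using gronwall

theorem le_pow_mul_add_div_one_sub_of_succ_le {R : Type*} [Field R] [LinearOrder R]
    [IsStrictOrderedRing R] {u : ℕ → R} {b c : R} (hb : 0 ≤ b) (hc : 0 ≤ c) (hc_lt : c < 1)
    (hu : ∀ n, u (n + 1) ≤ c * u n + b) (n : ℕ) :
    u n ≤ c ^ n * u 0 + b / (1 - c) := by
  have geom_sum_le : ∑ i ∈ range n, c ^ i ≤ (1 - c)⁻¹ := by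
    simpa using geom_sum_Ico_le_of_lt_one (m := 0) (n := n) hc hc_lt
  calc
    u n ≤ c ^ n * u 0 + b * ∑ i ∈ range n, c ^ i :=
      le_pow_mul_add_mul_geom_sum_of_succ_le hc hu n
    _ ≤ c ^ n * u 0 + b / (1 - c) := by rw [div_eq_mul_inv]; gcongr

section PseudoMetricSpace

variable {α β : Type*} [PseudoMetricSpace α] [PseudoMetricSpace β]

theorem dist_orbit_le_of_dist_step_le {K : ℝ≥0} {f : α → α} (hf : LipschitzWith K f) (hK : K < 1)
    {x y : ℕ → α} {ε : ℝ} (hx : ∀ n, dist (f (x n)) (x (n + 1)) ≤ ε)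
    (hy : ∀ n, y (n + 1) = f (y n)) (n : ℕ) :
    dist (y n) (x n) ≤ K ^ n * dist (y 0) (x 0) + ε / (1 - K) := by
  have hε : 0 ≤ ε := dist_nonneg.trans (hx 0)
  have error_step (n : ℕ) : dist (y (n + 1)) (x (n + 1)) ≤ K * dist (y n) (x n) + ε :=
    calc
      dist (y (n + 1)) (x (n + 1)) ≤ dist (f (y n)) (f (x n)) + dist (f (x n)) (x (n + 1)) :=
        hy n ▸ dist_triangle _ _ _
      _ ≤ K * dist (y n) (x n) + ε := add_le_add (hf.dist_le_mul _ _) (hx n)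
  exact le_pow_mul_add_div_one_sub_of_succ_le (u := fun n ↦ dist (y n) (x n))
    hε K.coe_nonneg hK error_step n

theorem isBounded_range_of_dist_le {ι : Type*} {x y : ι → α} {R : ℝ}
    (hx : IsBounded (Set.range x)) (hyx : ∀ i, dist (y i) (x i) ≤ R) : IsBounded (Set.range y) :=
  hx.cthickening.subset <| Set.range_subset_iff.2 fun i ↦
    Metric.mem_cthickening_of_dist_le _ _ R _ (Set.mem_range_self i) (hyx i)

theorem pnp_corrector_bounded_stability_general {F : α → β} {C : β → α} {L_F L_C : ℝ≥0}
    (hcontr : L_C * L_F < 1) (hF : LipschitzWith L_F F) (hC : LipschitzWith L_C C)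
    {x xtil : ℕ → α} {ε_corr : ℝ} (hcorr : ∀ t, dist (C (F (x t))) (x (t + 1)) ≤ ε_corr)
    (hroll : ∀ t, xtil (t + 1) = C (F (xtil t))) :
    (∀ T, dist (xtil T) (x T) ≤
        (L_C * L_F) ^ T * dist (xtil 0) (x 0) + ε_corr / (1 - L_C * L_F)) ∧
    (IsBounded (Set.range x) → IsBounded (Set.range xtil)) := by
  have error_le (T : ℕ) : dist (xtil T) (x T) ≤
      (L_C * L_F) ^ T * dist (xtil 0) (x 0) + ε_corr / (1 - L_C * L_F) :=
    mod_cast dist_orbit_le_of_dist_step_le (hC.comp hF) hcontr hcorr hroll T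
  have error_le_uniform (T : ℕ) :
      dist (xtil T) (x T) ≤ dist (xtil 0) (x 0) + ε_corr / (1 - L_C * L_F) := by
    refine (error_le T).trans (add_le_add_left (mul_le_of_le_one_left dist_nonneg ?_) _)
    exact pow_le_one₀ (by positivity) (mod_cast hcontr.le)
  exact ⟨error_le, fun hx ↦ isBounded_range_of_dist_le hx error_le_uniform⟩

end PseudoMetricSpace

/-- PnP-Corrector stability: with contraction `λ = L_C * L_F < 1`, the
corrected rollout error satisfies
`‖xtil T - x T‖ ≤ λ^T * ‖xtil 0 - x 0‖ + ε_corr / (1 - λ)` for every `T`;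
in particular, if the ground truth `x` is bounded then the corrected
rollout `xtil` is a bounded sequence. -/
theorem pnp_corrector_bounded_stability
    {E : Type*} [NormedAddCommGroup E] [NormedSpace ℝ E]
    (F C : E → E) (L_F L_C : ℝ) (hLF : 0 ≤ L_F) (hLC : 0 ≤ L_C)
    (hcontr : L_C * L_F < 1)
    (hLipF : ∀ a b : E, ‖F a - F b‖ ≤ L_F * ‖a - b‖)
    (hLipC : ∀ a b : E, ‖C a - C b‖ ≤ L_C * ‖a - b‖)
    (x : ℕ → E) (ε_corr : ℝ) (hε : 0 ≤ ε_corr)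
    (hcorr : ∀ t : ℕ, ‖C (F (x t)) - x (t + 1)‖ ≤ ε_corr)
    (xtil : ℕ → E) (hroll : ∀ t : ℕ, xtil (t + 1) = C (F (xtil t))) :
    (∀ T : ℕ, ‖xtil T - x T‖ ≤
        (L_C * L_F) ^ T * ‖xtil 0 - x 0‖ + ε_corr / (1 - L_C * L_F)) ∧
    ((∃ M : ℝ, ∀ t : ℕ, ‖x t‖ ≤ M) → ∃ M : ℝ, ∀ t : ℕ, ‖xtil t‖ ≤ M) := by
  lift L_F to ℝ≥0 using hLF
  lift L_C to ℝ≥0 using hLC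
  simp only [← dist_eq_norm] at hLipF hLipC hcorr ⊢
  simpa only [isBounded_iff_forall_norm_le, Set.forall_mem_range] using
    pnp_corrector_bounded_stability_general (mod_cast hcontr) (.of_dist_le_mul hLipF)
      (.of_dist_le_mul hLipC) hcorr hroll
end
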